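/- (Existence of the completion of a strong b-metric space) Let (X,d) be a strong b-metric space with constant s ≥ 1. Then there exist a complete strong b-metric space (X̃, d̃) with constant s and a map j : X → X̃ such that d̃(j(x), j(y)) = d(x,y) for all x,y ∈ X and j(X) is dense in X̃, i.e. for every ξ ∈ X̃ there is a sequence (xₙ) in X with d̃(j(xₙ), ξ) → 0. -/

import Mathlib

/-!
The map `x ↦ d x ·` pulls the sup distance between functions on `X` back to
`ρ x y = sup_z |d x z - d y z|`, as in Kuratowski's embedding of a metric space. The strong triangle
inequality gives `ρ ≤ s d`, and evaluating at `z = y` gives `d ≤ ρ`. So `ρ` is a genuine metric with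
the same Cauchy sequences and limits as `d`, and `d` is uniformly continuous for it. Hence `d`
extends to the metric completion of `(X, ρ)`, and the axioms and the comparison with `ρ` pass to the
extension by density.
-/

open Filter

universe u

/-- `d` is a strong b-metric on `X` with constant `s`. -/
def IsStrongBMetric {X : Type u} (s : ℝ) (d : X → X → ℝ) : Prop :=
  (∀ x y, 0 ≤ d x y) ∧ (∀ x y, d x y = 0 ↔ x = y) ∧ (∀ x y, d x y = d y x) ∧
  (∀ x y z, d x y ≤ d x z + s * d z y)

/-- A sequence is Cauchy for `d` if `d(xₙ,xₘ) → 0` as `n,m → ∞`. -/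
def IsBCauchy {X : Type u} (d : X → X → ℝ) (u : ℕ → X) : Prop :=
  ∀ ε : ℝ, 0 < ε → ∃ N : ℕ, ∀ m ≥ N, ∀ n ≥ N, d (u m) (u n) < ε

/-- `d` is complete: every Cauchy sequence converges. -/
def IsBComplete {X : Type u} (d : X → X → ℝ) : Prop :=
  ∀ u : ℕ → X, IsBCauchy d u → ∃ x : X, Tendsto (fun n => d x (u n)) atTop (nhds 0)

open Topology UniformSpace

theorem exists_seq_tendsto_of_denseRange {X Y : Type*} [TopologicalSpace Y]
    [FrechetUrysohnSpace Y] {j : X → Y} (hj : DenseRange j) (y : Y) :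
    ∃ u : ℕ → X, Tendsto (fun n => j (u n)) atTop (𝓝 y) := by
  obtain ⟨v, hv, hvy⟩ := mem_closure_iff_seq_limit.1 (hj y)
  choose u hu using hv
  exact ⟨u, by simpa only [hu] using hvy⟩

section Comparison

variable {Y : Type u} [PseudoMetricSpace Y] {D : Y → Y → ℝ} {c C : ℝ}

theorem tendsto_zero_of_le_mul_dist (hnonneg : ∀ x y, 0 ≤ D x y)
    (hle : ∀ x y, D x y ≤ c * dist x y) {ι : Type*} {l : Filter ι} {u v : ι → Y}
    (huv : Tendsto (fun i => dist (u i) (v i)) l (𝓝 0)) :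
    Tendsto (fun i => D (u i) (v i)) l (𝓝 0) :=
  squeeze_zero (fun _ => hnonneg _ _) (fun _ => hle _ _) (by simpa using huv.const_mul c)

theorem IsBCauchy.cauchySeq (hC : 0 < C) (hge : ∀ x y, dist x y ≤ C * D x y) {u : ℕ → Y}
    (hu : IsBCauchy D u) : CauchySeq u := by
  refine Metric.cauchySeq_iff.2 fun ε hε => ?_
  obtain ⟨N, hN⟩ := hu (ε / C) (div_pos hε hC)
  exact ⟨N, fun m hm n hn => (hge _ _).trans_lt ((lt_div_iff₀' hC).1 (hN m hm n hn))⟩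

theorem nonneg_of_dist_le_mul (hC : 0 < C) {x y : Y} {r : ℝ} (h : dist x y ≤ C * r) : 0 ≤ r :=
  nonneg_of_mul_nonneg_right (dist_nonneg.trans h) hC

theorem isBComplete_of_comparable_dist [CompleteSpace Y] (hle : ∀ x y, D x y ≤ c * dist x y)
    (hC : 0 < C) (hge : ∀ x y, dist x y ≤ C * D x y) : IsBComplete D := fun u hu => by
  have hnonneg (x y : Y) : 0 ≤ D x y := nonneg_of_dist_le_mul hC (hge x y)
  obtain ⟨x, hx⟩ := cauchySeq_tendsto_of_complete (hu.cauchySeq hC hge)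
  exact ⟨x, tendsto_zero_of_le_mul_dist hnonneg hle
    (by simpa only [dist_comm] using tendsto_iff_dist_tendsto_zero.1 hx)⟩

end Comparison

/-- The sup distance between the functions `d x ·` and `d y ·`. For a strong b-metric `d` it is a
metric comparable to `d`; for arbitrary `d` the supremum may be infinite, and then has the junk
value `0`. -/
noncomputable def kuratowskiDist {X : Type*} (d : X → X → ℝ) (x y : X) : ℝ := ⨆ z, |d x z - d y z|

namespace IsStrongBMetric

variable {X : Type u} {s c : ℝ} {d : X → X → ℝ}

protected theorem nonneg (hd : IsStrongBMetric s d) (x y : X) : 0 ≤ d x y := hd.1 x y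

protected theorem eq_zero_iff (hd : IsStrongBMetric s d) {x y : X} : d x y = 0 ↔ x = y := hd.2.1 x y

protected theorem comm (hd : IsStrongBMetric s d) (x y : X) : d x y = d y x := hd.2.2.1 x y

protected theorem triangle (hd : IsStrongBMetric s d) (x y z : X) : d x y ≤ d x z + s * d z y :=
  hd.2.2.2 x y z

theorem abs_sub_le_mul (hd : IsStrongBMetric s d) (x y z : X) : |d x z - d y z| ≤ s * d x y := by
  have sub_le (x y : X) : d x z - d y z ≤ s * d x y := by
    rw [hd.comm x z, hd.comm y z, hd.comm x y]
    exact sub_le_iff_le_add'.2 (hd.triangle z x y)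
  exact abs_sub_le_iff.2 ⟨sub_le x y, hd.comm x y ▸ sub_le y x⟩

theorem bddAbove_abs_sub (hd : IsStrongBMetric s d) (x y : X) :
    BddAbove (Set.range fun z => |d x z - d y z|) :=
  ⟨s * d x y, Set.forall_mem_range.2 (hd.abs_sub_le_mul x y)⟩

theorem abs_sub_le_kuratowskiDist (hd : IsStrongBMetric s d) (x y z : X) :
    |d x z - d y z| ≤ kuratowskiDist d x y :=
  le_ciSup (hd.bddAbove_abs_sub x y) z

theorem le_kuratowskiDist (hd : IsStrongBMetric s d) (x y : X) : d x y ≤ kuratowskiDist d x y := by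
  have hyy : d y y = 0 := hd.eq_zero_iff.2 rfl
  simpa only [hyy, sub_zero] using (le_abs_self _).trans (hd.abs_sub_le_kuratowskiDist x y y)

theorem kuratowskiDist_le (hd : IsStrongBMetric s d) (x y : X) :
    kuratowskiDist d x y ≤ s * d x y :=
  have : Nonempty X := ⟨x⟩
  ciSup_le (hd.abs_sub_le_mul x y)

theorem kuratowskiDist_triangle (hd : IsStrongBMetric s d) (x y z : X) :
    kuratowskiDist d x z ≤ kuratowskiDist d x y + kuratowskiDist d y z :=
  have : Nonempty X := ⟨x⟩
  ciSup_le fun w => (abs_sub_le (d x w) (d y w) (d z w)).trans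
    (add_le_add (hd.abs_sub_le_kuratowskiDist x y w) (hd.abs_sub_le_kuratowskiDist y z w))

/-- The space `X` remetrized by `kuratowskiDist d`. A pseudometric suffices here, because
`UniformSpace.Completion` is Hausdorff in any case. -/
noncomputable abbrev kuratowskiPseudoMetricSpace (hd : IsStrongBMetric s d) :
    PseudoMetricSpace X where
  dist := kuratowskiDist d
  dist_self x := by simp [kuratowskiDist]
  dist_comm x y := by simp only [kuratowskiDist, abs_sub_comm]
  dist_triangle := hd.kuratowskiDist_triangle

theorem uniformContinuous₂ [PseudoMetricSpace X] (hd : IsStrongBMetric s d) (hs : 0 ≤ s)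
    (hle : ∀ x y, d x y ≤ c * dist x y) : UniformContinuous₂ d := by
  have lipschitz_left (z : X) : LipschitzWith (s * c).toNNReal fun x => d x z :=
    LipschitzWith.of_dist_le' fun x y => calc
      |d x z - d y z| ≤ s * d x y := hd.abs_sub_le_mul x y z
      _ ≤ s * (c * dist x y) := mul_le_mul_of_nonneg_left (hle x y) hs
      _ = s * c * dist x y := (mul_assoc _ _ _).symm
  have lipschitz_right (z : X) : LipschitzWith (s * c).toNNReal (d z) := by
    simpa only [hd.comm _ z] using lipschitz_left z
  exact (LipschitzWith.uncurry lipschitz_left lipschitz_right).uniformContinuous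

end IsStrongBMetric

section UniformExtension

variable {X : Type*} [UniformSpace X] {d : X → X → ℝ} {s : ℝ}

theorem continuous_completion_extension₂ {Z : Type*} [TopologicalSpace Z] {f g : Z → Completion X}
    (hf : Continuous f) (hg : Continuous g) :
    Continuous fun z => Completion.extension₂ d (f z) (g z) :=
  (Completion.uniformContinuous_extension₂ d).continuous.comp (hf.prodMk hg)

theorem completion_extension₂_comm (huc : UniformContinuous₂ d) (hsymm : ∀ x y, d x y = d y x)
    (ξ η : Completion X) : Completion.extension₂ d ξ η = Completion.extension₂ d η ξ := by
  refine Completion.induction_on₂ ξ η (isClosed_eq ?_ ?_) fun x y => ?_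
  · exact continuous_completion_extension₂ continuous_fst continuous_snd
  · exact continuous_completion_extension₂ continuous_snd continuous_fst
  · simpa only [Completion.extension₂_coe_coe huc] using hsymm x y

theorem completion_extension₂_triangle (huc : UniformContinuous₂ d)
    (htri : ∀ x y z, d x y ≤ d x z + s * d z y) (ξ η ζ : Completion X) :
    Completion.extension₂ d ξ η ≤
      Completion.extension₂ d ξ ζ + s * Completion.extension₂ d ζ η := by
  refine Completion.induction_on₃ ξ η ζ (isClosed_le ?_ (.add ?_ (.const_mul ?_ s))) fun x y z => ?_
  iterate 3 exact continuous_completion_extension₂ (by fun_prop) (by fun_prop)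
  simpa only [Completion.extension₂_coe_coe huc] using htri x y z

end UniformExtension

section MetricExtension

variable {X : Type u} [PseudoMetricSpace X] {d : X → X → ℝ} {s c C : ℝ}

theorem completion_extension₂_le_mul_dist (huc : UniformContinuous₂ d)
    (hle : ∀ x y, d x y ≤ c * dist x y) (ξ η : Completion X) :
    Completion.extension₂ d ξ η ≤ c * dist ξ η := by
  refine Completion.induction_on₂ ξ η (isClosed_le ?_ (by fun_prop)) fun x y => ?_
  · exact continuous_completion_extension₂ continuous_fst continuous_snd
  · simpa only [Completion.extension₂_coe_coe huc, Completion.dist_eq] using hle x y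

theorem dist_le_mul_completion_extension₂ (huc : UniformContinuous₂ d)
    (hge : ∀ x y, dist x y ≤ C * d x y) (ξ η : Completion X) :
    dist ξ η ≤ C * Completion.extension₂ d ξ η := by
  refine Completion.induction_on₂ ξ η (isClosed_le (by fun_prop) ?_) fun x y => ?_
  · exact (continuous_completion_extension₂ continuous_fst continuous_snd).const_mul C
  · simpa only [Completion.extension₂_coe_coe huc, Completion.dist_eq] using hge x y

theorem IsStrongBMetric.completion_extension₂ (hd : IsStrongBMetric s d)
    (huc : UniformContinuous₂ d) (hle : ∀ x y, d x y ≤ c * dist x y) (hC : 0 < C)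
    (hge : ∀ x y, dist x y ≤ C * d x y) : IsStrongBMetric s (Completion.extension₂ d) := by
  have hle' := completion_extension₂_le_mul_dist huc hle
  have hge' := dist_le_mul_completion_extension₂ huc hge
  have hnonneg (ξ η : Completion X) : 0 ≤ Completion.extension₂ d ξ η :=
    nonneg_of_dist_le_mul hC (hge' ξ η)
  refine ⟨hnonneg, fun ξ η => ⟨fun h => ?_, ?_⟩, completion_extension₂_comm huc hd.comm,
    completion_extension₂_triangle huc hd.triangle⟩
  · exact dist_le_zero.1 (by simpa [h] using hge' ξ η)
  · rintro rfl
    exact (by simpa using hle' ξ ξ : Completion.extension₂ d ξ ξ ≤ 0).antisymm (hnonneg ξ ξ)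

end MetricExtension

/-- **Existence of the completion of a strong b-metric space.** -/
theorem strong_bmetric_completion_exists {X : Type u} [Nonempty X]
    (s : ℝ) (hs : 1 ≤ s) (d : X → X → ℝ) (hd : IsStrongBMetric s d) :
    ∃ (Y : Type u) (D : Y → Y → ℝ) (j : X → Y),
      IsStrongBMetric s D ∧ IsBComplete D ∧
      (∀ x y : X, D (j x) (j y) = d x y) ∧
      (∀ ξ : Y, ∃ u : ℕ → X, Tendsto (fun n => D (j (u n)) ξ) atTop (nhds 0)) := by
  let _ := hd.kuratowskiPseudoMetricSpace
  have hs_pos : 0 < s := one_pos.trans_le hs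
  have hle (x y : X) : d x y ≤ 1 * dist x y :=
    (hd.le_kuratowskiDist x y).trans_eq (one_mul _).symm
  have hge : ∀ x y : X, dist x y ≤ s * d x y := hd.kuratowskiDist_le
  have huc : UniformContinuous₂ d := hd.uniformContinuous₂ hs_pos.le hle
  have hle' := completion_extension₂_le_mul_dist huc hle
  have hge' := dist_le_mul_completion_extension₂ huc hge
  have hD := hd.completion_extension₂ huc hle hs_pos hge
  refine ⟨Completion X, Completion.extension₂ d, (↑), hD,
    isBComplete_of_comparable_dist hle' hs_pos hge', Completion.extension₂_coe_coe huc, fun ξ => ?_⟩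
  obtain ⟨u, hu⟩ := exists_seq_tendsto_of_denseRange Completion.denseRange_coe ξ
  exact ⟨u, tendsto_zero_of_le_mul_dist hD.nonneg hle' (tendsto_iff_dist_tendsto_zero.1 hu)⟩
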